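/- For all 0 ≤ i, j ≤ N, the (1,2) entry of the block M̃^{i,j} = ∫_{-1}^{α} P_i(x) W_{p,n}(x) P_j(x)^T dx equals (1-α²)^{n/2} · p(n-p) / ((n+1)²(p+i)(n-p+j)) · C_i^{(n+1)/2}(α) · C_j^{(n+1)/2}(α). -/

import Mathlib

open Matrix

/-- Pochhammer symbol `(a)_k = a (a+1) ⋯ (a+k-1)`. -/
noncomputable def poch (a : ℝ) (k : ℕ) : ℝ := ∏ i ∈ Finset.range k, (a + i)

/-- Gegenbauer polynomial `C_w^λ(x)`, with the convention `C_w^λ = 0` for `w < 0`. -/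
noncomputable def geg (l : ℝ) (w : ℤ) (x : ℝ) : ℝ :=
  if w < 0 then 0 else
    poch (2 * l) w.toNat / (w.toNat.factorial : ℝ) *
      ∑ k ∈ Finset.range (w.toNat + 1),
        (poch (-(w.toNat : ℝ)) k * poch ((w.toNat : ℝ) + 2 * l) k) /
            (poch (l + 1 / 2) k * (k.factorial : ℝ)) * ((1 - x) / 2) ^ k

/-- The weight matrix `W_{p,n}(x)`. -/
noncomputable def Wmat (n : ℕ) (p : ℝ) (x : ℝ) : Matrix (Fin 2) (Fin 2) ℝ :=
  (1 - x ^ 2) ^ ((n : ℝ) / 2 - 1) •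
    !![p * x ^ 2 + (n : ℝ) - p, -(n : ℝ) * x; -(n : ℝ) * x, ((n : ℝ) - p) * x ^ 2 + p]

/-- The matrix valued polynomial `P_w`. -/
noncomputable def Pmat (n : ℕ) (p : ℝ) (w : ℕ) (x : ℝ) : Matrix (Fin 2) (Fin 2) ℝ :=
  !![1 / ((n : ℝ) + 1) * geg (((n : ℝ) + 1) / 2) (w : ℤ) x +
        1 / (p + w) * geg (((n : ℝ) + 3) / 2) ((w : ℤ) - 2) x,
      1 / (p + w) * geg (((n : ℝ) + 3) / 2) ((w : ℤ) - 1) x;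
      1 / ((n : ℝ) - p + w) * geg (((n : ℝ) + 3) / 2) ((w : ℤ) - 1) x,
      1 / ((n : ℝ) + 1) * geg (((n : ℝ) + 1) / 2) (w : ℤ) x +
        1 / ((n : ℝ) - p + w) * geg (((n : ℝ) + 3) / 2) ((w : ℤ) - 2) x]

noncomputable def gaCoef (l : ℝ) (w k : ℕ) : ℝ :=
  poch (2 * l) w / (w.factorial : ℝ) *
    ((poch (-(w : ℝ)) k * poch ((w : ℝ) + 2 * l) k) / (poch (l + 1 / 2) k * (k.factorial : ℝ)))

lemma poch_succ (a : ℝ) (k : ℕ) : poch a (k + 1) = poch a k * (a + k) := by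
  simp [poch, Finset.prod_range_succ]

lemma poch_succ' (a : ℝ) (k : ℕ) : poch a (k + 1) = a * poch (a + 1) k := by
  simp only [poch, Finset.prod_range_succ', Nat.cast_zero, add_zero]
  rw [mul_comm]
  congr 1
  apply Finset.prod_congr rfl
  intro i _
  push_cast
  ring

lemma poch_add (a : ℝ) (w k : ℕ) : poch a w * poch (w + a) k = poch a (w + k) := by
  induction k with
  | zero => simp [poch]
  | succ k ih =>
    rw [poch_succ, ← mul_assoc, ih, ← add_assoc, poch_succ]
    push_cast
    ring

lemma poch_pos (a : ℝ) (ha : 0 < a) (k : ℕ) : 0 < poch a k := by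
  unfold poch
  exact Finset.prod_pos fun i _ => by positivity

lemma poch_neg_zero (w k : ℕ) (h : w < k) : poch (-(w : ℝ)) k = 0 := by
  unfold poch
  exact Finset.prod_eq_zero (Finset.mem_range.2 h) (by ring)

lemma gaCoef_zero (l : ℝ) (w k : ℕ) (h : w < k) : gaCoef l w k = 0 := by
  simp [gaCoef, poch_neg_zero w k h]

lemma gaCoef_eq (l : ℝ) (w k : ℕ) : gaCoef l w k =
    poch (2 * l) (w + k) * poch (-(w : ℝ)) k /
      ((w.factorial : ℝ) * (poch (l + 1 / 2) k * (k.factorial : ℝ))) := by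
  rw [gaCoef, ← poch_add, div_mul_div_comm]
  congr 1
  ring

lemma geg_eq (l : ℝ) (w M : ℕ) (hM : w < M) (x : ℝ) :
    geg l (w : ℤ) x = ∑ k ∈ Finset.range M, gaCoef l w k * ((1 - x) / 2) ^ k := by
  have h1 : geg l (w : ℤ) x =
      ∑ k ∈ Finset.range (w + 1), gaCoef l w k * ((1 - x) / 2) ^ k := by
    have : ¬ ((w : ℤ) < 0) := by omega
    simp only [geg, this, if_false, Int.toNat_natCast, gaCoef, Finset.mul_sum, mul_assoc]
  rw [h1]
  apply Finset.sum_subset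
  · intro k hk
    simp only [Finset.mem_range] at *
    omega
  · intro k _ hk
    rw [gaCoef_zero _ _ _ (by simpa using hk), zero_mul]

lemma gaCoef_deriv (l : ℝ) (hl : 0 < l) (m k : ℕ) :
    -(1 / 2) * ((k : ℝ) + 1) * gaCoef l (m + 1) (k + 1) = 2 * l * gaCoef (l + 1) m k := by
  have h1 : poch (l + 1 / 2) (k + 1) = (l + 1 / 2) * poch (l + 1 + 1 / 2) k := by
    rw [poch_succ']; congr 2; ring
  have h2 : poch (2 * l) (m + 1 + (k + 1)) = 2 * l * ((2 * l + 1) * poch (2 * (l + 1)) (m + k)) := by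
    rw [show m + 1 + (k + 1) = (m + k) + 1 + 1 by ring, poch_succ', poch_succ']
    congr 4; ring
  have h3 : poch (-((m + 1 : ℕ) : ℝ)) (k + 1) = -((m : ℝ) + 1) * poch (-(m : ℝ)) k := by
    rw [poch_succ']; push_cast; congr 2; ring
  rw [gaCoef_eq, gaCoef_eq, h1, h2, h3, Nat.factorial_succ, Nat.factorial_succ]
  have := (poch_pos (l + 1 + 1 / 2) (by positivity) k).ne'
  have := m.factorial_ne_zero
  have := k.factorial_ne_zero
  have : l + 1 / 2 ≠ 0 := by positivity
  push_cast
  field_simp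

lemma gaCoef_rec (l : ℝ) (hl : 0 < l) (m k : ℕ) :
    -(1 / 2) * ((k : ℝ) + 1) * gaCoef l (m + 1) (k + 1) + k * gaCoef l (m + 1) k
      - (-(1 / 2) * ((k : ℝ) + 1) * gaCoef l m (k + 1)) = (m + 1) * gaCoef l (m + 1) k := by
  have h3 : poch (-((m + 1 : ℕ) : ℝ)) (k + 1) = -((m : ℝ) + 1) * poch (-(m : ℝ)) k := by
    rw [poch_succ']; push_cast; congr 2; ring
  have h4 : poch (-((m + 1 : ℕ) : ℝ)) k * (-(m + 1) + k) = -((m : ℝ) + 1) * poch (-(m : ℝ)) k := by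
    rw [← h3, poch_succ]; push_cast; ring
  have h5 : poch (2 * l) (m + 1 + (k + 1)) = poch (2 * l) (m + k + 1) * (2 * l + (m + k + 1)) := by
    rw [show m + 1 + (k + 1) = (m + k + 1) + 1 by ring, poch_succ]; push_cast; ring
  have hP := (poch_pos (l + 1 / 2) (by positivity) k).ne'
  have hm := m.factorial_ne_zero
  have hk := k.factorial_ne_zero
  have hlk : l + 1 / 2 + k ≠ 0 := by positivity
  have h6 : (m + 1 - k) * gaCoef l (m + 1) k = poch (2 * l) (m + k + 1) * poch (-(m : ℝ)) k /
      ((m.factorial : ℝ) * (poch (l + 1 / 2) k * (k.factorial : ℝ))) := by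
    rw [gaCoef_eq, show m + 1 + k = m + k + 1 by ring, ← mul_div_assoc,
      show ((m : ℝ) + 1 - k) * (poch (2 * l) (m + k + 1) * poch (-((m + 1 : ℕ) : ℝ)) k) =
        poch (2 * l) (m + k + 1) * (-(poch (-((m + 1 : ℕ) : ℝ)) k * (-(m + 1) + k))) by ring, h4,
      Nat.factorial_succ]
    push_cast
    field_simp
  have h7 : -(1 / 2) * ((k : ℝ) + 1) * gaCoef l (m + 1) (k + 1)
      - (-(1 / 2) * ((k : ℝ) + 1) * gaCoef l m (k + 1)) = (m + 1 - k) * gaCoef l (m + 1) k := by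
    rw [h6, gaCoef_eq, gaCoef_eq, h3, h5, poch_succ (-(m : ℝ)), poch_succ (l + 1 / 2),
      Nat.factorial_succ, Nat.factorial_succ, ← add_assoc]
    push_cast
    have : l * 2 + 1 + 2 * (k : ℝ) ≠ 0 := by positivity
    field_simp
    ring
  linarith

lemma geg_hasDerivAt (l : ℝ) (w M : ℕ) (hM : w ≤ M) (x : ℝ) :
    HasDerivAt (fun x => geg l (w : ℤ) x)
      (∑ k ∈ Finset.range M, -(1 / 2) * ((k : ℝ) + 1) * gaCoef l w (k + 1) *
        ((1 - x) / 2) ^ k) x := by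
  have h : (fun x => geg l (w : ℤ) x) = fun x =>
      ∑ k ∈ Finset.range (M + 1), gaCoef l w k * ((1 - x) / 2) ^ k := by
    funext y
    exact geg_eq l w (M + 1) (by omega) y
  rw [h]
  have hb : HasDerivAt (fun x : ℝ => (1 - x) / 2) (-1 / 2) x :=
    ((hasDerivAt_id x).const_sub 1).div_const 2
  have := HasDerivAt.fun_sum (u := Finset.range (M + 1))
    (fun k _ => (hb.fun_pow k).const_mul (gaCoef l w k))
  refine this.congr_deriv ?_
  rw [Finset.sum_range_succ']
  simp only [Nat.cast_zero, zero_mul, mul_zero, add_zero]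
  apply Finset.sum_congr rfl
  intro k _
  simp only [Nat.add_sub_cancel]
  push_cast
  ring

lemma geg_hasDerivAt' (l : ℝ) (hl : 0 < l) (w : ℕ) (x : ℝ) :
    HasDerivAt (fun x => geg l (w : ℤ) x) (2 * l * geg (l + 1) ((w : ℤ) - 1) x) x := by
  convert geg_hasDerivAt l w w le_rfl x using 1
  cases w with
  | zero => simp [geg]
  | succ m =>
    rw [show (((m + 1 : ℕ) : ℤ) - 1) = (m : ℤ) by push_cast; ring,
      geg_eq (l + 1) m (m + 1) (by omega), Finset.mul_sum]
    apply Finset.sum_congr rfl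
    intro k _
    rw [gaCoef_deriv l hl]
    ring

lemma geg_rec (l : ℝ) (hl : 0 < l) (w : ℕ) (x : ℝ) :
    2 * l * geg (l + 1) ((w : ℤ) - 2) x =
      x * (2 * l * geg (l + 1) ((w : ℤ) - 1) x) - w * geg l (w : ℤ) x := by
  cases w with
  | zero => simp [geg]
  | succ m =>
    have e1 := (geg_hasDerivAt' l hl (m + 1) x).unique (geg_hasDerivAt l (m + 1) (m + 2) (by omega) x)
    have e2 := (geg_hasDerivAt' l hl m x).unique (geg_hasDerivAt l m (m + 2) (by omega) x)
    rw [show (((m + 1 : ℕ) : ℤ) - 2) = (m : ℤ) - 1 by push_cast; ring, e1, e2,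
      geg_eq l (m + 1) (m + 2) (by omega)]
    set t := (1 - x) / 2 with ht
    have hx : x = 1 - 2 * t := by rw [ht]; ring
    have h1 : ∑ k ∈ Finset.range (m + 2), ((k : ℝ) + 1) * gaCoef l (m + 1) (k + 1) * t ^ (k + 1)
        = ∑ k ∈ Finset.range (m + 2), (k : ℝ) * gaCoef l (m + 1) k * t ^ k := by
      have a := Finset.sum_range_succ (fun k : ℕ => (k : ℝ) * gaCoef l (m + 1) k * t ^ k) (m + 2)
      have b := Finset.sum_range_succ' (fun k : ℕ => (k : ℝ) * gaCoef l (m + 1) k * t ^ k) (m + 2)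
      rw [gaCoef_zero l (m + 1) (m + 2) (by omega)] at a
      push_cast at a b
      simp only [mul_zero, zero_mul, add_zero] at a b
      rw [← a, b]
    have h2 : x * ∑ k ∈ Finset.range (m + 2), -(1 / 2) * ((k : ℝ) + 1) * gaCoef l (m + 1) (k + 1) * t ^ k
        = ∑ k ∈ Finset.range (m + 2), -(1 / 2) * ((k : ℝ) + 1) * gaCoef l (m + 1) (k + 1) * t ^ k
          + ∑ k ∈ Finset.range (m + 2), (k : ℝ) * gaCoef l (m + 1) k * t ^ k := by
      rw [← h1, hx, Finset.mul_sum, ← Finset.sum_add_distrib]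
      apply Finset.sum_congr rfl
      intro k _
      ring
    rw [h2, Finset.mul_sum, ← Finset.sum_add_distrib, ← Finset.sum_sub_distrib]
    apply Finset.sum_congr rfl
    intro k _
    have := gaCoef_rec l hl m k
    push_cast
    rw [← mul_assoc, ← this]
    ring

lemma weight_integrable (s α : ℝ) (hs : -1 < s) (hα : α ∈ Set.Ioo (-1 : ℝ) 1) :
    IntervalIntegrable (fun x : ℝ => (1 - x ^ 2) ^ s) MeasureTheory.volume (-1) α := by
  have h1 : IntervalIntegrable (fun x : ℝ => (x + 1) ^ s) MeasureTheory.volume (-1) α := by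
    have := (intervalIntegral.intervalIntegrable_rpow' (a := 0) (b := α + 1) hs).comp_add_right 1
    simpa using this
  have h2 : ContinuousOn (fun x : ℝ => (1 - x) ^ s) (Set.uIcc (-1) α) := by
    intro x hx
    rw [Set.uIcc_of_le hα.1.le] at hx
    have : 1 - x ≠ 0 := by linarith [hx.2, hα.2]
    exact (ContinuousAt.rpow_const (by fun_prop) (Or.inl this)).continuousWithinAt
  refine (h1.mul_continuousOn h2).congr ?_
  intro x hx
  rw [Set.uIoc_of_le hα.1.le] at hx
  have a : 0 ≤ x + 1 := by linarith [hx.1]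
  have b : 0 ≤ 1 - x := by linarith [hx.2, hα.2]
  simp only
  rw [← Real.mul_rpow a b]
  congr 1
  ring

/-- The `(1,2)` entry of `M̃^{i,j} = ∫_{-1}^α P_i W_{p,n} P_j^T dx`. -/
theorem stmt_17 (n : ℕ) (hn : 1 ≤ n) (p : ℝ) (hp : 0 < p) (hpn : p < n)
    (N : ℕ) (α : ℝ) (hα : α ∈ Set.Ioo (-1 : ℝ) 1) :
    ∀ i j : ℕ, i ≤ N → j ≤ N →
      (∫ x in (-1 : ℝ)..α, (Pmat n p i x * Wmat n p x * (Pmat n p j x)ᵀ) 0 1) =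
        (1 - α ^ 2) ^ ((n : ℝ) / 2) * p * ((n : ℝ) - p) /
            (((n : ℝ) + 1) ^ 2 * (p + i) * ((n : ℝ) - p + j)) *
          geg (((n : ℝ) + 1) / 2) (i : ℤ) α * geg (((n : ℝ) + 1) / 2) (j : ℤ) α := by
  intro i j _ _
  obtain ⟨hα1, hα2⟩ := hα
  have hn0 : (0 : ℝ) < n := by exact_mod_cast hn
  set l : ℝ := ((n : ℝ) + 1) / 2 with hl
  have hlpos : 0 < l := by positivity
  have hl1 : ((n : ℝ) + 3) / 2 = l + 1 := by rw [hl]; ring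
  have h2l : 2 * l = n + 1 := by rw [hl]; ring
  have hd : ∀ (w : ℕ) (x : ℝ), HasDerivAt (fun x => geg l (w : ℤ) x)
      (2 * l * geg (l + 1) ((w : ℤ) - 1) x) x := geg_hasDerivAt' l hlpos
  have hr := geg_rec l hlpos
  have hpi : p + i ≠ 0 := by positivity
  have hqpos : 0 < (n : ℝ) - p := by linarith
  have hqj : (n : ℝ) - p + j ≠ 0 := by positivity
  set K : ℝ := p * ((n : ℝ) - p) / (((n : ℝ) + 1) ^ 2 * (p + i) * ((n : ℝ) - p + j)) with hK
  set c := fun x => geg l (i : ℤ) x with hc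
  set d := fun x => geg l (j : ℤ) x with hdd
  set c' := fun x => 2 * l * geg (l + 1) ((i : ℤ) - 1) x with hc'
  set d' := fun x => 2 * l * geg (l + 1) ((j : ℤ) - 1) x with hd'
  have hint : ∀ x, (Pmat n p i x * Wmat n p x * (Pmat n p j x)ᵀ) 0 1 =
      (1 - x ^ 2) ^ ((n : ℝ) / 2 - 1) *
        (K * (-n * x * (c x * d x) + (1 - x ^ 2) * (c' x * d x + c x * d' x))) := by
    intro x
    have ri := hr i x
    have rj := hr j x
    have hnn : (n : ℝ) + 1 ≠ 0 := by positivity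
    simp only [Pmat, Wmat, hl1, ← hl]
    simp only [hc, hdd, hc', hd', hK]
    rw [h2l] at *
    have gi : geg (l + 1) ((i : ℤ) - 2) x = (x * ((n + 1) * geg (l + 1) ((i : ℤ) - 1) x)
      - i * geg l (i : ℤ) x) / (n + 1) := by rw [← ri]; field_simp
    have gj : geg (l + 1) ((j : ℤ) - 2) x = (x * ((n + 1) * geg (l + 1) ((j : ℤ) - 1) x)
      - j * geg l (j : ℤ) x) / (n + 1) := by rw [← rj]; field_simp
    rw [gi, gj]
    simp [Matrix.mul_apply, Fin.sum_univ_two]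
    generalize geg (l + 1) ((i : ℤ) - 1) x = A
    generalize geg (l + 1) ((j : ℤ) - 1) x = B
    generalize geg l (i : ℤ) x = C
    generalize geg l (j : ℤ) x = D
    generalize (1 - x ^ 2) ^ ((n : ℝ) / 2 - 1) = R
    field_simp
    ring
  have hcc : Continuous c := continuous_iff_continuousAt.2 fun x => (hd i x).continuousAt
  have hdc : Continuous d := continuous_iff_continuousAt.2 fun x => (hd j x).continuousAt
  have hgc : ∀ w : ℕ, Continuous fun x => 2 * l * geg (l + 1) ((w : ℤ) - 1) x := by
    intro w
    cases w with
    | zero => simp [geg, continuous_const]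
    | succ m =>
      have : Continuous fun x => geg (l + 1) (m : ℤ) x := continuous_iff_continuousAt.2
        fun x => (geg_hasDerivAt' (l + 1) (by positivity) m x).continuousAt
      rw [show (((m + 1 : ℕ) : ℤ) - 1) = (m : ℤ) by push_cast; ring]
      exact this.const_mul _
  have hcc' : Continuous c' := hgc i
  have hdc' : Continuous d' := hgc j
  simp_rw [hint]
  rw [intervalIntegral.integral_eq_sub_of_hasDerivAt_of_le
    (f := fun x => K * ((1 - x ^ 2) ^ ((n : ℝ) / 2) * (c x * d x))) hα1.le]
  · have : (1 - (-1 : ℝ) ^ 2) ^ ((n : ℝ) / 2) = 0 := by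
      norm_num
      exact Real.zero_rpow (by positivity)
    rw [this, hK]
    ring
  · apply Continuous.continuousOn
    have : Continuous fun x : ℝ => (1 - x ^ 2) ^ ((n : ℝ) / 2) :=
      Continuous.rpow_const (by fun_prop) fun x => Or.inr (by positivity)
    fun_prop
  · intro x hx
    have hpos : 0 < 1 - x ^ 2 := by nlinarith [hx.1, hx.2]
    have hb : HasDerivAt (fun x : ℝ => 1 - x ^ 2) (-(2 * x)) x := by
      simpa using (hasDerivAt_pow 2 x).const_sub 1
    have h1 := hb.rpow_const (p := (n : ℝ) / 2) (Or.inl hpos.ne')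
    have h2 := (h1.fun_mul ((hd i x).fun_mul (hd j x))).const_mul K
    refine h2.congr_deriv ?_
    have : (1 - x ^ 2) ^ ((n : ℝ) / 2) = (1 - x ^ 2) ^ ((n : ℝ) / 2 - 1) * (1 - x ^ 2) := by
      rw [← Real.rpow_add_one hpos.ne']; congr 1; ring
    rw [this]
    simp only [hc, hdd, hc', hd']
    ring
  · exact (weight_integrable _ α (by linarith [half_pos hn0]) ⟨hα1, hα2⟩).mul_continuousOn
      (by fun_prop)
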